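/- arXiv:1112.5415 — 2 statements merged into one kernel-verified Lean document; each statement's English description precedes it below -/
import Mathlib

section
/- Let ‖·‖ be the Euclidean norm on V for which Δ is an orthonormal basis. Then there exists λ > 0 such that for every positive root ρ ∈ Φ⁺ one has ‖ρ‖² ≥ 1 + λ·(dp(ρ) − 1). -/
open Filter Topology

noncomputable section

variable {ι V : Type*} [Fintype ι] [NormedAddCommGroup V] [NormedSpace ℝ V]

/-- The set of simple `B`-reflections: the linear automorphisms of `V` given by the
`B`-reflection formula `u ↦ u - 2 (B α u / B α α) • α` associated to a simple root `α ∈ Δ`. -/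
def simpleReflections (B : LinearMap.BilinForm ℝ V) (Δ : Module.Basis ι ℝ V) :
    Set (V ≃ₗ[ℝ] V) :=
  { e | ∃ i : ι, ∀ u : V, e u = u - (2 * B (Δ i) u / B (Δ i) (Δ i)) • Δ i }

/-- The geometric Coxeter group `W`: the subgroup of linear automorphisms of `V`
generated by the simple `B`-reflections. -/
def cox (B : LinearMap.BilinForm ℝ V) (Δ : Module.Basis ι ℝ V) : Subgroup (V ≃ₗ[ℝ] V) :=
  Subgroup.closure (simpleReflections B Δ)

/-- The root system `Φ = W ⬝ Δ`. -/
def Phi (B : LinearMap.BilinForm ℝ V) (Δ : Module.Basis ι ℝ V) : Set V :=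
  { ρ | ∃ w ∈ cox B Δ, ∃ i : ι, w (Δ i) = ρ }

/-- The positive roots `Φ⁺ = Φ ∩ cone(Δ)`. -/
def posPhi (B : LinearMap.BilinForm ℝ V) (Δ : Module.Basis ι ℝ V) : Set V :=
  { ρ ∈ Phi B Δ | ∀ i : ι, 0 ≤ Δ.repr ρ i }

/-- `|v|₁`: the sum of the coordinates of `v` in the basis `Δ`. -/
def l1 (Δ : Module.Basis ι ℝ V) (v : V) : ℝ := ∑ i : ι, Δ.repr v i

/-- The normalization map `v ↦ v̂ = v / |v|₁`. -/
def nrm (Δ : Module.Basis ι ℝ V) (v : V) : V := (l1 Δ v)⁻¹ • v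

/-- The set `Φ̂` of normalized roots. -/
def nPhi (B : LinearMap.BilinForm ℝ V) (Δ : Module.Basis ι ℝ V) : Set V :=
  nrm Δ '' posPhi B Δ

/-- `E(Φ)`: the set of accumulation points of the set of normalized roots. -/
def Eset (B : LinearMap.BilinForm ℝ V) (Δ : Module.Basis ι ℝ V) : Set V :=
  { x | AccPt x (𝓟 (nPhi B Δ)) }

/-- The isotropic cone `Q` of `B`. -/
def isoQ (B : LinearMap.BilinForm ℝ V) : Set V := { v | B v v = 0 }

/-- `ρ` can be written as `s_{α₁} s_{α₂} ⋯ s_{α_k} (α_{k+1})` with the `αⱼ` simple roots. -/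
def hasExpr (B : LinearMap.BilinForm ℝ V) (Δ : Module.Basis ι ℝ V) (ρ : V) (k : ℕ) : Prop :=
  ∃ l : List (V ≃ₗ[ℝ] V), l.length = k ∧ (∀ e ∈ l, e ∈ simpleReflections B Δ) ∧
    ∃ i : ι, l.prod (Δ i) = ρ

/-- The depth of a positive root:
`dp(ρ) = 1 + min { k | ρ = s_{α₁} s_{α₂} ⋯ s_{α_k} (α_{k+1}) }`. -/
def depth (B : LinearMap.BilinForm ℝ V) (Δ : Module.Basis ι ℝ V) (ρ : V) : ℕ :=
  1 + sInf { k : ℕ | hasExpr B Δ ρ k }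

/-!
A simple reflection `s_i` with `B(α_i, ρ) > 0` lowers only the `α_i`-coordinate of a positive root
`ρ ≠ α_i`, by `2 B(α_i, ρ)`, and keeps it nonnegative, so `‖ρ‖²` drops by at least
`4 B(α_i, ρ)²`; some such `i` exists because `B(ρ, ρ) = 1`. Descending to a simple root, it is
enough that the positive values of `B` on pairs of roots are bounded below by some `κ > 0`, and
then `λ = 4κ²` works.

For that bound, only the values `|B(α, ρ)| < 1` matter, and there are finitely many of them. Indeed
`B` is then positive definite on the plane of `α` and `ρ`, so the group generated by their two
reflections is bounded, hence finite by discreteness of the Coxeter group. Averaging a linear form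
that is positive on the simple roots over this finite group gives a form in the interior of the
Tits cone vanishing at `α` and `ρ`. Moving it into the closed fundamental chamber carries `α` and
`ρ` into a finite standard parabolic root system, and there are finitely many of these.

That every root is positive or negative is proved by Deodhar's method: a word is split at a
shortest coset representative of a rank-two subgroup, and in rank two the coefficients are values of
Chebyshev polynomials of the second kind.
-/

open Polynomial.Chebyshev CoxeterSystem
open scoped Pointwise

theorem chebyshevU_eval_nonneg_and_le_of_one_le {c : ℝ} (hc : 1 ≤ c) (n : ℕ) :
    0 ≤ (U ℝ (n - 1)).eval c ∧ (U ℝ (n - 1)).eval c ≤ (U ℝ n).eval c := by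
  induction n with
  | zero => simp
  | succ n ih =>
    have hrec : (U ℝ (n + 1)).eval c = 2 * c * (U ℝ n).eval c - (U ℝ (n - 1)).eval c := by
      simp [U_add_one]
    push_cast
    rw [add_sub_cancel_right, hrec]
    constructor <;> nlinarith

theorem sin_pi_div_pos {k : ℕ} (hk : 2 ≤ k) : 0 < Real.sin (Real.pi / k) :=
  have hk' : (1 : ℝ) < k := by exact_mod_cast hk
  Real.sin_pos_of_pos_of_lt_pi (by positivity) (div_lt_self Real.pi_pos hk')

theorem chebyshevU_eval_cos_pi_div_nonneg {k : ℕ} (hk : 2 ≤ k) {n : ℤ} (hn : -1 ≤ n)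
    (hnk : n < k) : 0 ≤ (U ℝ n).eval (Real.cos (Real.pi / k)) := by
  have hk' : (0 : ℝ) < k := by positivity
  have hn' : (0 : ℝ) ≤ n + 1 := by exact_mod_cast (by lia : 0 ≤ n + 1)
  have hnk' : (n + 1 : ℝ) ≤ k := by exact_mod_cast hnk
  refine nonneg_of_mul_nonneg_left ?_ (sin_pi_div_pos hk)
  rw [U_real_cos, mul_div_left_comm]
  refine Real.sin_nonneg_of_nonneg_of_le_pi (by positivity) ?_
  exact mul_le_of_le_one_right Real.pi_pos.le ((div_le_one hk').2 hnk')

theorem chebyshevU_eval_cos_pi_div_succ {n : ℕ} (hn : 1 ≤ n) :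
    (U ℝ n).eval (Real.cos (Real.pi / (n + 1 : ℕ))) = 0 := by
  have hsin := U_real_cos (Real.pi / (n + 1 : ℕ)) n
  have harg : ((n : ℤ) + 1 : ℝ) * (Real.pi / (n + 1 : ℕ)) = Real.pi := by
    push_cast; field_simp
  rw [harg, Real.sin_pi] at hsin
  exact (mul_eq_zero.1 hsin).resolve_right (sin_pi_div_pos (by lia)).ne'

theorem chebyshevU_eval_cos_pi_div_succ_pred {n : ℕ} (hn : 1 ≤ n) :
    (U ℝ (n - 1)).eval (Real.cos (Real.pi / (n + 1 : ℕ))) = 1 := by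
  have hsin := U_real_cos (Real.pi / (n + 1 : ℕ)) (n - 1)
  have harg : (((n - 1 : ℤ) : ℝ) + 1) * (Real.pi / (n + 1 : ℕ)) =
      Real.pi - Real.pi / (n + 1 : ℕ) := by
    push_cast; field_simp; ring
  rw [harg, Real.sin_pi_sub] at hsin
  exact mul_right_cancel₀ (sin_pi_div_pos (by lia)).ne' (hsin.trans (one_mul _).symm)

theorem finite_of_totallyBounded_range {α X : Type*} [PseudoMetricSpace X] {f : α → X}
    (hf : TotallyBounded (Set.range f)) {δ : ℝ} (hδ : 0 < δ)
    (hsep : ∀ a b, dist (f a) (f b) < δ → a = b) : Finite α := by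
  obtain ⟨t, htf, htfin, hcover⟩ := Metric.finite_approx_of_totallyBounded hf δ hδ
  have hinj : Function.Injective f := fun a b hab => hsep a b (by rwa [hab, dist_self])
  have hrange : Set.range f ⊆ t := by
    rintro _ ⟨a, rfl⟩
    obtain ⟨_, hbt, hab⟩ := Set.mem_iUnion₂.1 (hcover (Set.mem_range_self a))
    obtain ⟨b, rfl⟩ := htf hbt
    rwa [hsep a b hab]
  have := (htfin.subset hrange).to_subtype
  exact Finite.of_injective_finite_range hinj

theorem abs_le_of_quadratic_le {e p q x y : ℝ} (he : 0 < e)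
    (hxy : e * (x ^ 2 + y ^ 2) + 2 * (x * p + y * q) ≤ 0) :
    |x| ≤ 2 * (|p| + |q|) / e := by
  have hsq : (e * x + p) ^ 2 ≤ (|p| + |q|) ^ 2 := by
    nlinarith [mul_le_mul_of_nonneg_left hxy he.le, sq_nonneg (e * y + q), sq_abs p, sq_abs q,
      abs_nonneg p, abs_nonneg q, mul_nonneg (abs_nonneg p) (abs_nonneg q)]
  have hle : |e * x + p| ≤ |p| + |q| := abs_le_of_sq_le_sq hsq (by positivity)
  rw [le_div_iff₀ he]
  calc |x| * e = |e * x + p - p| := by rw [add_sub_cancel_right, abs_mul, abs_of_pos he, mul_comm]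
    _ ≤ |e * x + p| + |p| := abs_sub _ _
    _ ≤ 2 * (|p| + |q|) := by linarith [abs_nonneg q]

theorem map_eq_sum_repr {σ R M : Type*} [CommSemiring R] [AddCommMonoid M] [Module R M]
    (Δ : Module.Basis σ R M) (f : Module.Dual R M) (v : M) :
    f v = ∑ i ∈ (Δ.repr v).support, Δ.repr v i * f (Δ i) := by
  conv_lhs => rw [← Δ.linearCombination_repr v, Finsupp.apply_linearCombination]
  rfl

section UnitReflection

variable {R M : Type*} [CommRing R] [AddCommGroup M] [Module R M]

/-- The `B`-reflection in a vector `v` with `B v v = 1`. -/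
def unitReflection (B : LinearMap.BilinForm R M) {v : M} (hv : B v v = 1) : M ≃ₗ[R] M :=
  Module.reflection (x := v) (f := (2 : R) • B v) (by simp [hv])

variable {B : LinearMap.BilinForm R M} {v : M} (hv : B v v = 1)

theorem unitReflection_apply (u : M) : unitReflection B hv u = u - (2 * B v u) • v := by
  simp [unitReflection, Module.reflection_apply]

theorem unitReflection_self : unitReflection B hv v = -v :=
  Module.reflection_apply_self _

theorem unitReflection_unitReflection (u : M) :
    unitReflection B hv (unitReflection B hv u) = u :=
  Module.involutive_reflection _ u

theorem unitReflection_mul_self : unitReflection B hv * unitReflection B hv = 1 :=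
  LinearEquiv.ext (unitReflection_unitReflection hv)

theorem apply_unitReflection_unitReflection (hB : ∀ x y, B x y = B y x) (x y : M) :
    B (unitReflection B hv x) (unitReflection B hv y) = B x y := by
  simp only [unitReflection_apply, map_sub, map_smul, LinearMap.sub_apply, LinearMap.smul_apply,
    smul_eq_mul, hv, hB x v]
  ring

theorem conj_unitReflection {g : M ≃ₗ[R] M} (hg : ∀ x y, B (g x) (g y) = B x y) {u : M}
    (hu : B u u = 1) (hgv : g v = u) :
    g * unitReflection B hv * g⁻¹ = unitReflection B hu := by
  ext x
  have hgx : g (g⁻¹ x) = x := g.apply_symm_apply x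
  have hB : B v (g⁻¹ x) = B u x := by rw [← hg, hgv, hgx]
  rw [LinearEquiv.mul_apply, LinearEquiv.mul_apply, unitReflection_apply, unitReflection_apply,
    map_sub, map_smul, hgx, hgv, hB]

/-- The subgroup generated by the reflections in `α` and `ρ`. -/
def dihedralSubgroup (B : LinearMap.BilinForm R M) {α ρ : M} (hα : B α α = 1) (hρ : B ρ ρ = 1) :
    Subgroup (M ≃ₗ[R] M) :=
  Subgroup.closure {unitReflection B hα, unitReflection B hρ}

theorem unitReflection_left_mem_dihedralSubgroup {α ρ : M} (hα : B α α = 1) (hρ : B ρ ρ = 1) :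
    unitReflection B hα ∈ dihedralSubgroup B hα hρ :=
  Subgroup.subset_closure (Set.mem_insert _ _)

theorem unitReflection_right_mem_dihedralSubgroup {α ρ : M} (hα : B α α = 1) (hρ : B ρ ρ = 1) :
    unitReflection B hρ ∈ dihedralSubgroup B hα hρ :=
  Subgroup.subset_closure (Set.mem_insert_of_mem _ rfl)

theorem sub_mem_span_pair_of_mem_dihedralSubgroup {α ρ : M} {hα : B α α = 1} {hρ : B ρ ρ = 1}
    {d : M ≃ₗ[R] M} (hd : d ∈ dihedralSubgroup B hα hρ) (v : M) :
    d v - v ∈ Submodule.span R {α, ρ} := by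
  induction hd using Subgroup.closure_induction generalizing v with
  | mem d hd =>
    obtain rfl | rfl := hd
    · rw [unitReflection_apply, sub_sub_cancel_left]
      exact neg_mem (Submodule.smul_mem _ _ (Submodule.mem_span_of_mem (by simp)))
    · rw [unitReflection_apply, sub_sub_cancel_left]
      exact neg_mem (Submodule.smul_mem _ _ (Submodule.mem_span_of_mem (by simp)))
  | one => simp
  | mul d e _ _ ihd ihe =>
    rw [LinearEquiv.mul_apply, ← sub_add_sub_cancel]
    exact add_mem (ihd (e v)) (ihe v)
  | inv d _ ih =>
    have hdv : d (d⁻¹ v) = v := d.apply_symm_apply v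
    have := ih (d⁻¹ v)
    rw [hdv] at this
    exact sub_mem_comm_iff.1 this

end UnitReflection

theorem exists_norm_le_of_mem_span_pair {M : Type*} [NormedAddCommGroup M] [NormedSpace ℝ M]
    {B : LinearMap.BilinForm ℝ M} (hB : ∀ x y, B x y = B y x) {α ρ : M} (hα : B α α = 1)
    (hρ : B ρ ρ = 1) (hαρ : |B α ρ| < 1) (v : M) :
    ∃ C, ∀ z ∈ Submodule.span ℝ {α, ρ}, B (v + z) (v + z) = B v v → ‖z‖ ≤ C := by
  set b := B α ρ with hb
  set K := 2 * (|B v α| + |B v ρ|) / (1 - |b|) with hK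
  refine ⟨K * ‖α‖ + K * ‖ρ‖, fun z hz hvz => ?_⟩
  obtain ⟨x, y, rfl⟩ := Submodule.mem_span_pair.1 hz
  have hquad : (1 - |b|) * (x ^ 2 + y ^ 2) + 2 * (x * B v α + y * B v ρ) ≤ 0 := by
    have hexpand : x ^ 2 + y ^ 2 + 2 * (b * (x * y)) + 2 * (x * B v α + y * B v ρ) = 0 := by
      simp only [map_add, map_smul, LinearMap.add_apply, LinearMap.smul_apply, smul_eq_mul, hα,
        hρ, hB α v, hB ρ v, hB ρ α, ← hb] at hvz
      linear_combination hvz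
    have hcross : -(b * (x * y)) ≤ |b| * ((x ^ 2 + y ^ 2) / 2) :=
      calc -(b * (x * y)) ≤ |b| * |x * y| := by
            rw [← abs_mul]
            exact neg_le_abs _
        _ ≤ |b| * ((x ^ 2 + y ^ 2) / 2) := by
            gcongr
            rw [abs_mul, ← sq_abs x, ← sq_abs y]
            linarith [two_mul_le_add_sq |x| |y|]
    linarith
  have hx : |x| ≤ K := abs_le_of_quadratic_le (sub_pos.2 hαρ) hquad
  have hy : |y| ≤ K := by
    rw [hK, add_comm |B v α|]
    refine abs_le_of_quadratic_le (y := x) (sub_pos.2 hαρ) ?_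
    linarith only [hquad]
  calc ‖x • α + y • ρ‖ ≤ |x| * ‖α‖ + |y| * ‖ρ‖ := by
        simpa only [norm_smul, Real.norm_eq_abs] using norm_add_le (x • α) (y • ρ)
    _ ≤ K * ‖α‖ + K * ‖ρ‖ := by gcongr

/-- `Δ` is a basis of simple roots for the form `B`: the defining conditions on a based root
system, without its roots. -/
structure IsCoxeterForm {σ M : Type*} [AddCommGroup M] [Module ℝ M]
    (B : LinearMap.BilinForm ℝ M) (Δ : Module.Basis σ ℝ M) : Prop where
  symm : ∀ u v, B u v = B v u
  apply_self : ∀ i, B (Δ i) (Δ i) = 1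
  apply_of_ne : ∀ i j, i ≠ j → B (Δ i) (Δ j) ≤ -1 ∨
    ∃ k : ℕ, 2 ≤ k ∧ B (Δ i) (Δ j) = -Real.cos (Real.pi / (k : ℝ))

namespace IsCoxeterForm

section Words

variable {σ M : Type*} [AddCommGroup M] [Module ℝ M] {B : LinearMap.BilinForm ℝ M}
  {Δ : Module.Basis σ ℝ M}

/-- The reflection in the simple root `Δ i`. -/
def simpleReflection (h : IsCoxeterForm B Δ) (i : σ) : M ≃ₗ[ℝ] M :=
  unitReflection B (h.apply_self i)

theorem simpleReflection_apply (h : IsCoxeterForm B Δ) (i : σ) (u : M) :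
    h.simpleReflection i u = u - (2 * B (Δ i) u) • Δ i :=
  unitReflection_apply _ u

theorem simpleReflection_self (h : IsCoxeterForm B Δ) (i : σ) :
    h.simpleReflection i (Δ i) = -Δ i :=
  unitReflection_self _

theorem simpleReflection_simpleReflection (h : IsCoxeterForm B Δ) (i : σ) (u : M) :
    h.simpleReflection i (h.simpleReflection i u) = u :=
  unitReflection_unitReflection _ u

theorem simpleReflection_mul_self (h : IsCoxeterForm B Δ) (i : σ) :
    h.simpleReflection i * h.simpleReflection i = 1 :=
  unitReflection_mul_self _

theorem mul_simpleReflection_mul_self (h : IsCoxeterForm B Δ) (w : M ≃ₗ[ℝ] M) (i : σ) :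
    w * h.simpleReflection i * h.simpleReflection i = w := by
  rw [mul_assoc, simpleReflection_mul_self, mul_one]

theorem simpleReflection_mul_simpleReflection_mul (h : IsCoxeterForm B Δ) (i : σ)
    (w : M ≃ₗ[ℝ] M) : h.simpleReflection i * (h.simpleReflection i * w) = w := by
  rw [← mul_assoc, simpleReflection_mul_self, one_mul]

/-- The product of simple reflections spelled by a word in the index set of `Δ`. -/
def wordProd (h : IsCoxeterForm B Δ) (l : List σ) : M ≃ₗ[ℝ] M :=
  (l.map h.simpleReflection).prod

theorem wordProd_cons (h : IsCoxeterForm B Δ) (i : σ) (l : List σ) :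
    h.wordProd (i :: l) = h.simpleReflection i * h.wordProd l := by
  simp [wordProd]

/-- The elements of length at most `n` in the Coxeter group, that is, the products of `n` factors
each of which is a simple reflection or `1`. -/
def ball (h : IsCoxeterForm B Δ) (n : ℕ) : Set (M ≃ₗ[ℝ] M) :=
  insert 1 (Set.range h.simpleReflection) ^ n

theorem ball_mono (h : IsCoxeterForm B Δ) : Monotone h.ball := fun _ _ hmn =>
  Set.pow_subset_pow_right (Set.mem_insert _ _) hmn

theorem mul_mem_ball (h : IsCoxeterForm B Δ) {m n : ℕ} {v w : M ≃ₗ[ℝ] M} (hv : v ∈ h.ball m)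
    (hw : w ∈ h.ball n) : v * w ∈ h.ball (m + n) := by
  rw [ball, pow_add]
  exact Set.mul_mem_mul hv hw

theorem simpleReflection_mem_ball (h : IsCoxeterForm B Δ) (i : σ) :
    h.simpleReflection i ∈ h.ball 1 := by
  rw [ball, pow_one]
  exact Set.mem_insert_of_mem _ ⟨i, rfl⟩

theorem wordProd_mem_ball (h : IsCoxeterForm B Δ) (l : List σ) :
    h.wordProd l ∈ h.ball l.length := by
  induction l with
  | nil => exact rfl
  | cons i l ih =>
    rw [wordProd_cons, List.length_cons, add_comm]
    exact h.mul_mem_ball (h.simpleReflection_mem_ball i) ih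

theorem mem_ball_zero (h : IsCoxeterForm B Δ) {w : M ≃ₗ[ℝ] M} : w ∈ h.ball 0 ↔ w = 1 :=
  Iff.rfl

theorem mem_ball_succ (h : IsCoxeterForm B Δ) {n : ℕ} {w : M ≃ₗ[ℝ] M} :
    w ∈ h.ball (n + 1) ↔ w ∈ h.ball n ∨ ∃ v ∈ h.ball n, ∃ i, w = v * h.simpleReflection i := by
  constructor
  · rw [ball, pow_succ]
    rintro ⟨v, hv, _, rfl | ⟨i, rfl⟩, rfl⟩
    · exact Or.inl ((mul_one v).symm ▸ hv)
    · exact Or.inr ⟨v, hv, i, rfl⟩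
  · rintro (hw | ⟨v, hv, i, rfl⟩)
    · exact h.ball_mono n.le_succ hw
    · exact h.mul_mem_ball hv (h.simpleReflection_mem_ball i)

theorem apply_apply_of_mem_ball (h : IsCoxeterForm B Δ) {n : ℕ} {w : M ≃ₗ[ℝ] M}
    (hw : w ∈ h.ball n) (x y : M) : B (w x) (w y) = B x y := by
  induction n generalizing w x y with
  | zero => rw [h.mem_ball_zero.1 hw, LinearEquiv.coe_one, id, id]
  | succ n ih =>
    obtain hw | ⟨v, hv, i, rfl⟩ := h.mem_ball_succ.1 hw
    · exact ih hw x y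
    · rw [LinearEquiv.mul_apply, LinearEquiv.mul_apply, ih hv]
      exact apply_unitReflection_unitReflection _ h.symm x y

theorem wordProd_alternatingWord_mem_ball (h : IsCoxeterForm B Δ) (i j : σ) (m : ℕ) :
    h.wordProd (alternatingWord i j m) ∈ h.ball m := by
  simpa only [length_alternatingWord] using h.wordProd_mem_ball (alternatingWord i j m)

theorem wordProd_alternatingWord_succ (h : IsCoxeterForm B Δ) (i j : σ) (m : ℕ) :
    h.wordProd (alternatingWord i j (m + 1)) =
      h.simpleReflection (if Even m then j else i) * h.wordProd (alternatingWord i j m) := by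
  rw [alternatingWord_succ', wordProd_cons]

theorem wordProd_alternatingWord_apply (h : IsCoxeterForm B Δ) (i j : σ) (m : ℕ) :
    h.wordProd (alternatingWord i j m) (Δ i) =
      (U ℝ m).eval (-B (Δ i) (Δ j)) • Δ (if Even m then i else j) +
        (U ℝ (m - 1)).eval (-B (Δ i) (Δ j)) • Δ (if Even m then j else i) := by
  induction m with
  | zero => simp [alternatingWord, wordProd]
  | succ m ih =>
    have hrec : (U ℝ (m + 1)).eval (-B (Δ i) (Δ j)) =
        2 * -B (Δ i) (Δ j) * (U ℝ m).eval (-B (Δ i) (Δ j)) -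
          (U ℝ (m - 1)).eval (-B (Δ i) (Δ j)) := by
      simp [U_add_one]
    rw [wordProd_alternatingWord_succ, LinearEquiv.mul_apply, ih, simpleReflection_apply]
    push_cast
    rw [add_sub_cancel_right, hrec]
    rcases Nat.even_or_odd m with hm | hm
    · simp only [hm, Nat.even_add_one, not_true_eq_false, if_true, if_false, map_add, map_smul,
        h.apply_self, h.symm (Δ j) (Δ i), smul_eq_mul]
      module
    · rw [← Nat.not_even_iff_odd] at hm
      simp only [hm, Nat.even_add_one, not_false_eq_true, if_true, if_false, map_add, map_smul,
        h.apply_self, smul_eq_mul]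
      module

/-- For `m = k` this is the braid relation, and it propagates to longer words. -/
theorem wordProd_alternatingWord_mul_mem_ball (h : IsCoxeterForm B Δ) {i j : σ} {k : ℕ}
    (hk : 2 ≤ k) (hB : B (Δ i) (Δ j) = -Real.cos (Real.pi / k)) {m : ℕ} (hm : k ≤ m) :
    h.wordProd (alternatingWord i j m) * h.simpleReflection i ∈ h.ball (m - 1) := by
  obtain ⟨n, rfl⟩ : ∃ n, k = n + 1 := ⟨k - 1, by lia⟩
  induction m, hm using Nat.le_induction with
  | base =>
    set a := h.wordProd (alternatingWord i j n)
    set l := if Even n then j else i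
    have hball : a ∈ h.ball n := h.wordProd_alternatingWord_mem_ball i j n
    have ha : a (Δ i) = Δ l := by
      rw [wordProd_alternatingWord_apply, hB, neg_neg, chebyshevU_eval_cos_pi_div_succ (by lia),
        chebyshevU_eval_cos_pi_div_succ_pred (by lia), zero_smul, one_smul, zero_add]
    have hconj : a * h.simpleReflection i = h.simpleReflection l * a :=
      mul_inv_eq_iff_eq_mul.1 <| conj_unitReflection (h.apply_self i)
        (h.apply_apply_of_mem_ball hball) (h.apply_self l) ha
    rw [wordProd_alternatingWord_succ, mul_assoc, hconj, simpleReflection_mul_simpleReflection_mul]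
    exact hball
  | succ m hm ih =>
    rw [wordProd_alternatingWord_succ, mul_assoc]
    convert h.mul_mem_ball (h.simpleReflection_mem_ball _) ih using 2
    lia

theorem chebyshevU_eval_nonneg_of_notMem_ball (h : IsCoxeterForm B Δ) {i j : σ} (hij : i ≠ j)
    {m : ℕ} (hm : h.wordProd (alternatingWord i j m) * h.simpleReflection i ∉ h.ball (m - 1)) :
    0 ≤ (U ℝ m).eval (-B (Δ i) (Δ j)) ∧ 0 ≤ (U ℝ (m - 1)).eval (-B (Δ i) (Δ j)) := by
  obtain hB | ⟨k, hk, hB⟩ := h.apply_of_ne i j hij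
  · obtain ⟨hpred, hle⟩ := chebyshevU_eval_nonneg_and_le_of_one_le (le_neg_of_le_neg hB) m
    exact ⟨hpred.trans hle, hpred⟩
  · have hmk : m < k := lt_of_not_ge fun hkm =>
      hm (h.wordProd_alternatingWord_mul_mem_ball hk hB hkm)
    rw [hB, neg_neg]
    exact ⟨chebyshevU_eval_cos_pi_div_nonneg hk (by lia) (by lia),
      chebyshevU_eval_cos_pi_div_nonneg hk (by lia) (by lia)⟩

/-- Here `v` is a shortest element of the coset `v₀ s_j ⟨s_i, s_j⟩` among those obtained by
splitting off an alternating word. -/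
theorem exists_mul_wordProd_alternatingWord (h : IsCoxeterForm B Δ) {n : ℕ}
    {v₀ : M ≃ₗ[ℝ] M} {i j : σ} (hv₀ : v₀ ∈ h.ball n)
    (hw : v₀ * h.simpleReflection j * h.simpleReflection i ∉ h.ball n) :
    ∃ N m : ℕ, N ≤ n ∧ N + m = n + 1 ∧ ∃ v ∈ h.ball N,
      v * h.wordProd (alternatingWord i j m) = v₀ * h.simpleReflection j ∧
      ∀ r, r = i ∨ r = j → ∀ k < N, v * h.simpleReflection r ∉ h.ball k := by
  classical
  set w := v₀ * h.simpleReflection j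
  let P (N : ℕ) : Prop := ∃ m, N + m = n + 1 ∧ ∃ v ∈ h.ball N,
    v * h.wordProd (alternatingWord i j m) = w
  have hPn : P n := ⟨1, rfl, v₀, hv₀, by simp [w, alternatingWord, wordProd]⟩
  obtain ⟨N, ⟨m, hNm, v, hv, hvw⟩, hmin⟩ : ∃ N, P N ∧ ∀ k < N, ¬ P k :=
    ⟨Nat.find ⟨n, hPn⟩, Nat.find_spec _, fun _ => Nat.find_min _⟩
  have hNn : N ≤ n := le_of_not_gt fun hnN => hmin n hnN hPn
  refine ⟨N, m, hNn, hNm, v, hv, hvw, fun r hr k hk hvr => ?_⟩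
  obtain ⟨m, rfl⟩ : ∃ m', m = m' + 1 := ⟨m - 1, by lia⟩
  have hvr' : v * h.simpleReflection r ∈ h.ball (N - 1) := h.ball_mono (by lia) hvr
  have hcases : r = (if Even m then j else i) ∨ r = (if Even (m + 1) then j else i) := by
    grind
  obtain hfirst | hnext := hcases
  · have hwv : w = v * h.simpleReflection r * h.wordProd (alternatingWord i j m) := by
      rw [← hvw, wordProd_alternatingWord_succ, hfirst, mul_assoc]
    refine hw (h.ball_mono (?_ : N - 1 + (m + 1) ≤ n) ?_)
    · lia
    · rw [hwv, mul_assoc]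
      exact h.mul_mem_ball hvr' (h.mul_mem_ball (h.wordProd_alternatingWord_mem_ball i j m)
        (h.simpleReflection_mem_ball i))
  · refine hmin (N - 1) (by lia) ⟨m + 2, by lia, _, hvr', ?_⟩
    rw [wordProd_alternatingWord_succ, ← hnext, ← mul_assoc, mul_simpleReflection_mul_self, hvw]

theorem repr_nonneg_of_forall_notMem_ball (h : IsCoxeterForm B Δ) {n : ℕ} {w : M ≃ₗ[ℝ] M}
    {i : σ} (hw : w ∈ h.ball n) (hwi : ∀ m < n, w * h.simpleReflection i ∉ h.ball m) :
    0 ≤ Δ.repr (w (Δ i)) := by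
  induction n using Nat.strong_induction_on generalizing w i with
  | _ n ih =>
  obtain _ | n := n
  · rw [h.mem_ball_zero.1 hw, LinearEquiv.coe_one, id, Δ.repr_self]
    exact Finsupp.single_nonneg.2 zero_le_one
  obtain hw | ⟨v₀, hv₀, j, rfl⟩ := h.mem_ball_succ.1 hw
  · exact ih n n.lt_succ_self hw fun m hm => hwi m (hm.trans n.lt_succ_self)
  have hwi_n := hwi n n.lt_succ_self
  have hij : i ≠ j := by
    rintro rfl
    exact hwi_n (by rwa [mul_simpleReflection_mul_self])
  obtain ⟨N, m, hNn, hNm, v, hv, hvw, hmin⟩ := h.exists_mul_wordProd_alternatingWord hv₀ hwi_n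
  have hvi : 0 ≤ Δ.repr (v (Δ i)) := ih N (by lia) hv (hmin i (Or.inl rfl))
  have hvj : 0 ≤ Δ.repr (v (Δ j)) := ih N (by lia) hv (hmin j (Or.inr rfl))
  have hshort : h.wordProd (alternatingWord i j m) * h.simpleReflection i ∉ h.ball (m - 1) := by
    intro hmem
    have := h.mul_mem_ball hv hmem
    rw [← mul_assoc, hvw] at this
    exact hwi_n (h.ball_mono (by lia) this)
  obtain ⟨hU, hU'⟩ := h.chebyshevU_eval_nonneg_of_notMem_ball hij hshort
  rw [← hvw, LinearEquiv.mul_apply, wordProd_alternatingWord_apply, map_add, map_smul, map_smul,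
    map_add, map_smul, map_smul]
  exact add_nonneg (smul_nonneg hU (by split_ifs <;> assumption))
    (smul_nonneg hU' (by split_ifs <;> assumption))

theorem repr_nonneg_or_repr_neg_nonneg (h : IsCoxeterForm B Δ) {n : ℕ} {w : M ≃ₗ[ℝ] M}
    (hw : w ∈ h.ball n) (i : σ) : 0 ≤ Δ.repr (w (Δ i)) ∨ 0 ≤ Δ.repr (-w (Δ i)) := by
  classical
  let P (k : ℕ) : Prop := w ∈ h.ball k ∨ w * h.simpleReflection i ∈ h.ball k
  obtain ⟨k, hk, hmin⟩ : ∃ k, P k ∧ ∀ m < k, ¬ P m :=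
    ⟨Nat.find ⟨n, Or.inl hw⟩, Nat.find_spec _, fun _ => Nat.find_min _⟩
  obtain hk | hk := hk
  · exact Or.inl (h.repr_nonneg_of_forall_notMem_ball hk fun m hm hwi => hmin m hm (Or.inr hwi))
  · have hpos := h.repr_nonneg_of_forall_notMem_ball hk fun m hm hwi =>
      hmin m hm (Or.inl (by rwa [mul_simpleReflection_mul_self] at hwi))
    rw [LinearEquiv.mul_apply, simpleReflection_self, map_neg] at hpos
    exact Or.inr hpos

theorem eq_one_of_forall_repr_nonneg (h : IsCoxeterForm B Δ) {n : ℕ} {w : M ≃ₗ[ℝ] M}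
    (hw : w ∈ h.ball n) (hpos : ∀ i, 0 ≤ Δ.repr (w (Δ i))) : w = 1 := by
  induction n with
  | zero => exact h.mem_ball_zero.1 hw
  | succ n ih =>
    by_cases hwn : w ∈ h.ball n
    · exact ih hwn
    obtain ⟨v, hv, j, rfl⟩ := (h.mem_ball_succ.1 hw).resolve_left hwn
    have hvj : 0 ≤ Δ.repr (v (Δ j)) :=
      h.repr_nonneg_of_forall_notMem_ball hv fun m hm hm' => hwn (h.ball_mono hm.le hm')
    have hwj := hpos j
    rw [LinearEquiv.mul_apply, simpleReflection_self, map_neg, map_neg, neg_nonneg] at hwj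
    have hzero : Δ.repr (v (Δ j)) = 0 := le_antisymm hwj hvj
    rw [LinearEquiv.map_eq_zero_iff, LinearEquiv.map_eq_zero_iff] at hzero
    exact absurd hzero (Δ.ne_zero j)

end Words

end IsCoxeterForm

section Phi

variable {σ M : Type*} [NormedAddCommGroup M] [NormedSpace ℝ M] {B : LinearMap.BilinForm ℝ M}
  {Δ : Module.Basis σ ℝ M}

theorem basis_mem_posPhi (i : σ) : Δ i ∈ posPhi B Δ := by
  refine ⟨⟨1, one_mem _, i, rfl⟩, fun j => ?_⟩
  rw [Δ.repr_self]
  exact Finsupp.single_nonneg.2 zero_le_one j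

theorem map_mem_Phi {w : M ≃ₗ[ℝ] M} (hw : w ∈ cox B Δ) {ρ : M} (hρ : ρ ∈ Phi B Δ) :
    w ρ ∈ Phi B Δ := by
  obtain ⟨v, hv, i, rfl⟩ := hρ
  exact ⟨w * v, mul_mem hw hv, i, rfl⟩

end Phi

namespace IsCoxeterForm

section Roots

variable {σ M : Type*} [NormedAddCommGroup M] [NormedSpace ℝ M] {B : LinearMap.BilinForm ℝ M}
  {Δ : Module.Basis σ ℝ M}

theorem simpleReflections_eq_range (h : IsCoxeterForm B Δ) :
    simpleReflections B Δ = Set.range h.simpleReflection := by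
  ext e
  simp only [simpleReflections, Set.mem_ofPred_eq, Set.mem_range, h.apply_self, div_one,
    LinearEquiv.ext_iff, simpleReflection_apply, eq_comm]

theorem simpleReflection_mem_cox (h : IsCoxeterForm B Δ) (i : σ) :
    h.simpleReflection i ∈ cox B Δ :=
  Subgroup.subset_closure (h.simpleReflections_eq_range ▸ Set.mem_range_self i)

theorem exists_mem_ball_of_mem_cox (h : IsCoxeterForm B Δ) {w : M ≃ₗ[ℝ] M} (hw : w ∈ cox B Δ) :
    ∃ n, w ∈ h.ball n := by
  rw [cox, simpleReflections_eq_range h] at hw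
  induction hw using Subgroup.closure_induction_right with
  | one => exact ⟨0, h.mem_ball_zero.2 rfl⟩
  | mul_right w _ s hs ih =>
    obtain ⟨n, hn⟩ := ih
    obtain ⟨i, rfl⟩ := hs
    exact ⟨n + 1, h.mul_mem_ball hn (h.simpleReflection_mem_ball i)⟩
  | mul_inv_cancel w _ s hs ih =>
    obtain ⟨n, hn⟩ := ih
    obtain ⟨i, rfl⟩ := hs
    rw [inv_eq_of_mul_eq_one_right (h.simpleReflection_mul_self i)]
    exact ⟨n + 1, h.mul_mem_ball hn (h.simpleReflection_mem_ball i)⟩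

theorem apply_apply_of_mem_cox (h : IsCoxeterForm B Δ) {w : M ≃ₗ[ℝ] M} (hw : w ∈ cox B Δ)
    (x y : M) : B (w x) (w y) = B x y :=
  let ⟨_, hn⟩ := h.exists_mem_ball_of_mem_cox hw
  h.apply_apply_of_mem_ball hn x y

theorem apply_self_of_mem_Phi (h : IsCoxeterForm B Δ) {ρ : M} (hρ : ρ ∈ Phi B Δ) :
    B ρ ρ = 1 := by
  obtain ⟨w, hw, i, rfl⟩ := hρ
  rw [h.apply_apply_of_mem_cox hw, h.apply_self]

theorem unitReflection_mem_cox (h : IsCoxeterForm B Δ) {ρ : M} (hρ : ρ ∈ Phi B Δ) :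
    unitReflection B (h.apply_self_of_mem_Phi hρ) ∈ cox B Δ := by
  obtain ⟨w, hw, i, rfl⟩ := id hρ
  rw [← conj_unitReflection (h.apply_self i) (h.apply_apply_of_mem_cox hw) _ rfl]
  exact mul_mem (mul_mem hw (h.simpleReflection_mem_cox i)) (inv_mem hw)

theorem neg_mem_Phi (h : IsCoxeterForm B Δ) {ρ : M} (hρ : ρ ∈ Phi B Δ) : -ρ ∈ Phi B Δ := by
  rw [← unitReflection_self (h.apply_self_of_mem_Phi hρ)]
  exact map_mem_Phi (h.unitReflection_mem_cox hρ) hρ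

theorem mem_posPhi_or_neg_mem_posPhi (h : IsCoxeterForm B Δ) {ρ : M} (hρ : ρ ∈ Phi B Δ) :
    ρ ∈ posPhi B Δ ∨ -ρ ∈ posPhi B Δ := by
  obtain ⟨w, hw, i, rfl⟩ := id hρ
  obtain ⟨n, hn⟩ := h.exists_mem_ball_of_mem_cox hw
  exact (h.repr_nonneg_or_repr_neg_nonneg hn i).imp (⟨hρ, ·⟩) (⟨h.neg_mem_Phi hρ, ·⟩)

theorem sumCoords_pos (h : IsCoxeterForm B Δ) {ρ : M} (hρ : ρ ∈ posPhi B Δ) :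
    0 < Δ.sumCoords ρ := by
  have hne : Δ.repr ρ ≠ 0 := by
    intro hzero
    have := h.apply_self_of_mem_Phi hρ.1
    simp [(LinearEquiv.map_eq_zero_iff _).1 hzero] at this
  rw [Module.Basis.coe_sumCoords]
  exact Finset.sum_pos (fun i hi => (hρ.2 i).lt_of_ne' (Finsupp.mem_support_iff.1 hi))
    (Finsupp.support_nonempty_iff.2 hne)

theorem mem_posPhi_of_sumCoords_pos (h : IsCoxeterForm B Δ) {ρ : M} (hρ : ρ ∈ Phi B Δ)
    (hpos : 0 < Δ.sumCoords ρ) : ρ ∈ posPhi B Δ := by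
  refine (h.mem_posPhi_or_neg_mem_posPhi hρ).resolve_right fun hneg => ?_
  have := h.sumCoords_pos hneg
  rw [map_neg] at this
  linarith

theorem eq_one_of_forall_sumCoords_pos (h : IsCoxeterForm B Δ) {w : M ≃ₗ[ℝ] M}
    (hw : w ∈ cox B Δ) (hpos : ∀ i, 0 < Δ.sumCoords (w (Δ i))) : w = 1 := by
  obtain ⟨n, hn⟩ := h.exists_mem_ball_of_mem_cox hw
  exact h.eq_one_of_forall_repr_nonneg hn fun i =>
    (h.mem_posPhi_of_sumCoords_pos ⟨w, hw, i, rfl⟩ (hpos i)).2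

theorem exists_repr_pos_of_ne (h : IsCoxeterForm B Δ) {ρ : M} (hρ : ρ ∈ posPhi B Δ) {i : σ}
    (hne : ρ ≠ Δ i) : ∃ j ≠ i, 0 < Δ.repr ρ j := by
  by_contra! hle
  obtain ⟨c, hc⟩ : ∃ c, ρ = c • Δ i := by
    refine ⟨Δ.repr ρ i, Δ.repr.injective (Finsupp.ext fun j => ?_)⟩
    rcases eq_or_ne j i with rfl | hj
    · simp
    · simpa [Finsupp.single_apply, hj.symm] using le_antisymm (hle j hj) (hρ.2 j)
  have hcc : c * c = 1 := by
    simpa only [hc, map_smul, LinearMap.smul_apply, smul_eq_mul, h.apply_self, mul_one] using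
      h.apply_self_of_mem_Phi hρ.1
  have hc0 : 0 ≤ c := by simpa [hc] using hρ.2 i
  rw [show c = 1 by nlinarith, one_smul] at hc
  exact hne hc

theorem simpleReflection_mem_posPhi (h : IsCoxeterForm B Δ) {ρ : M} (hρ : ρ ∈ posPhi B Δ)
    {i : σ} (hne : ρ ≠ Δ i) : h.simpleReflection i ρ ∈ posPhi B Δ := by
  obtain ⟨j, hji, hj⟩ := h.exists_repr_pos_of_ne hρ hne
  refine (h.mem_posPhi_or_neg_mem_posPhi
    (map_mem_Phi (h.simpleReflection_mem_cox i) hρ.1)).resolve_right fun hneg => ?_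
  have hrepr : Δ.repr (h.simpleReflection i ρ) j = Δ.repr ρ j := by
    simp [simpleReflection_apply, hji.symm]
  have := hneg.2 j
  rw [map_neg, Finsupp.neg_apply, hrepr] at this
  linarith

/-- The linear forms that are positive on all but finitely many positive roots: the interior of the
Tits cone. -/
def titsInterior (B : LinearMap.BilinForm ℝ M) (Δ : Module.Basis σ ℝ M) :
    Set (Module.Dual ℝ M) :=
  {y | {γ ∈ posPhi B Δ | y γ ≤ 0}.Finite}

theorem sumCoords_mem_titsInterior (h : IsCoxeterForm B Δ) : Δ.sumCoords ∈ titsInterior B Δ :=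
  Set.finite_empty.subset fun _ hγ => hγ.2.not_gt (h.sumCoords_pos hγ.1)

theorem sum_mem_titsInterior {α : Type*} {s : Finset α} (hs : s.Nonempty)
    {y : α → Module.Dual ℝ M} (hy : ∀ a ∈ s, y a ∈ titsInterior B Δ) :
    ∑ a ∈ s, y a ∈ titsInterior B Δ := by
  refine (s.finite_toSet.biUnion hy).subset fun γ ⟨hγ, hle⟩ => ?_
  obtain ⟨a, ha, hya⟩ := Finset.exists_le_of_sum_le (f := (y · γ)) (g := 0) hs
    (by simpa using hle)
  exact Set.mem_biUnion (Finset.mem_coe.2 ha) ⟨hγ, hya⟩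

theorem comp_simpleReflection_mem_titsInterior (h : IsCoxeterForm B Δ) {y : Module.Dual ℝ M}
    (hy : y ∈ titsInterior B Δ) (i : σ) :
    y ∘ₗ ↑(h.simpleReflection i) ∈ titsInterior B Δ := by
  refine ((hy.image (h.simpleReflection i)).insert (Δ i)).subset fun γ ⟨hγ, hle⟩ => ?_
  refine or_iff_not_imp_left.2 fun hne => ?_
  exact ⟨_, ⟨h.simpleReflection_mem_posPhi hγ hne, hle⟩, h.simpleReflection_simpleReflection i γ⟩

theorem comp_mem_titsInterior (h : IsCoxeterForm B Δ) {y : Module.Dual ℝ M}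
    (hy : y ∈ titsInterior B Δ) {w : M ≃ₗ[ℝ] M} (hw : w ∈ cox B Δ) :
    y ∘ₗ ↑w ∈ titsInterior B Δ := by
  obtain ⟨n, hn⟩ := h.exists_mem_ball_of_mem_cox hw
  clear hw
  induction n generalizing w with
  | zero => rwa [h.mem_ball_zero.1 hn]
  | succ n ih =>
    obtain hn | ⟨v, hv, i, rfl⟩ := h.mem_ball_succ.1 hn
    · exact ih hn
    · exact h.comp_simpleReflection_mem_titsInterior (ih hv) i

theorem ncard_neg_comp_simpleReflection_lt (h : IsCoxeterForm B Δ) {y : Module.Dual ℝ M}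
    (hy : y ∈ titsInterior B Δ) {i : σ} (hi : y (Δ i) < 0) :
    {γ ∈ posPhi B Δ | y (h.simpleReflection i γ) < 0}.ncard <
      {γ ∈ posPhi B Δ | y γ < 0}.ncard := by
  set N := {γ ∈ posPhi B Δ | y γ < 0}
  have hN : N.Finite := hy.subset fun γ hγ => ⟨hγ.1, hγ.2.le⟩
  have hsub : {γ ∈ posPhi B Δ | y (h.simpleReflection i γ) < 0} ⊆
      h.simpleReflection i '' (N \ {Δ i}) := by
    rintro γ ⟨hγ, hneg⟩
    have hne : γ ≠ Δ i := by
      rintro rfl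
      rw [simpleReflection_self, map_neg] at hneg
      linarith
    refine ⟨h.simpleReflection i γ, ⟨⟨h.simpleReflection_mem_posPhi hγ hne, hneg⟩, ?_⟩,
      h.simpleReflection_simpleReflection i γ⟩
    intro hself
    have hγ' : γ = -Δ i := by
      rw [← h.simpleReflection_simpleReflection i γ, hself, simpleReflection_self]
    have := h.sumCoords_pos hγ
    rw [hγ', map_neg, Module.Basis.sumCoords_self_apply] at this
    linarith
  calc _ ≤ (h.simpleReflection i '' (N \ {Δ i})).ncard :=
        Set.ncard_le_ncard hsub (hN.sdiff.image _)
    _ ≤ (N \ {Δ i}).ncard := Set.ncard_image_le hN.sdiff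
    _ < N.ncard := Set.ncard_sdiff_singleton_lt_of_mem ⟨basis_mem_posPhi i, hi⟩ hN

theorem exists_mem_cox_forall_nonneg (h : IsCoxeterForm B Δ) {y : Module.Dual ℝ M}
    (hy : y ∈ titsInterior B Δ) : ∃ w ∈ cox B Δ, ∀ i, 0 ≤ y (w (Δ i)) := by
  induction hn : {γ ∈ posPhi B Δ | y γ < 0}.ncard using Nat.strong_induction_on
    generalizing y with
  | _ n ih =>
  by_cases hpos : ∀ i, 0 ≤ y (Δ i)
  · exact ⟨1, one_mem _, hpos⟩
  push Not at hpos
  obtain ⟨i, hi⟩ := hpos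
  obtain ⟨w, hw, hwy⟩ := ih _ (hn ▸ h.ncard_neg_comp_simpleReflection_lt hy hi)
    (h.comp_simpleReflection_mem_titsInterior hy i) rfl
  exact ⟨h.simpleReflection i * w, mul_mem (h.simpleReflection_mem_cox i) hw, hwy⟩

theorem finite_setOf_mem_Phi_eq_zero (h : IsCoxeterForm B Δ) {y : Module.Dual ℝ M}
    (hy : y ∈ titsInterior B Δ) : {γ ∈ Phi B Δ | y γ = 0}.Finite := by
  refine (hy.union (hy.image Neg.neg)).subset fun γ ⟨hγ, hzero⟩ => ?_
  obtain hpos | hneg := h.mem_posPhi_or_neg_mem_posPhi hγ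
  · exact Or.inl ⟨hpos, hzero.le⟩
  · exact Or.inr ⟨-γ, ⟨hneg, by simp [hzero]⟩, neg_neg γ⟩

/-- The roots in the span of the simple roots indexed by `I`. -/
def parabolicRoots (B : LinearMap.BilinForm ℝ M) (Δ : Module.Basis σ ℝ M) (I : Set σ) : Set M :=
  {γ ∈ Phi B Δ | ∀ i ∉ I, Δ.repr γ i = 0}

theorem setOf_mem_Phi_eq_zero_eq_parabolicRoots (h : IsCoxeterForm B Δ) {z : Module.Dual ℝ M}
    (hz : ∀ i, 0 ≤ z (Δ i)) :
    {γ ∈ Phi B Δ | z γ = 0} = parabolicRoots B Δ {i | z (Δ i) = 0} := by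
  have hpos {γ : M} (hγ : γ ∈ posPhi B Δ) (hzero : z γ = 0) (i : σ) (hi : z (Δ i) ≠ 0) :
      Δ.repr γ i = 0 := by
    rw [map_eq_sum_repr Δ z,
      Finset.sum_eq_zero_iff_of_nonneg fun i _ => mul_nonneg (hγ.2 i) (hz i)] at hzero
    by_contra hne
    exact mul_ne_zero hne hi (hzero i (Finsupp.mem_support_iff.2 hne))
  ext γ
  refine and_congr_right fun hγ => ⟨fun hzero i hi => ?_, fun hI => ?_⟩
  · obtain hγ | hγ := h.mem_posPhi_or_neg_mem_posPhi hγ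
    · exact hpos hγ hzero i hi
    · simpa using hpos hγ (by simp [hzero]) i hi
  · rw [map_eq_sum_repr Δ z]
    exact Finset.sum_eq_zero fun i _ => mul_eq_zero.2 (or_iff_not_imp_right.2 (hI i))

/-- Discreteness of the Coxeter group: an element close to `1` keeps the simple roots positive, so
it is `1`. -/
theorem finite_of_forall_norm_le [Finite σ] (h : IsCoxeterForm B Δ) {D : Subgroup (M ≃ₗ[ℝ] M)}
    (hD : D ≤ cox B Δ) (hbdd : ∀ v, ∃ C, ∀ d : D, ‖(d : M ≃ₗ[ℝ] M) v‖ ≤ C) : Finite D := by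
  have : FiniteDimensional ℝ M := .of_basis Δ
  have : CompleteSpace M := FiniteDimensional.complete ℝ M
  have : ProperSpace (M →L[ℝ] M) := FiniteDimensional.proper_real _
  let T (d : M ≃ₗ[ℝ] M) : M →L[ℝ] M := (d : M →ₗ[ℝ] M).toContinuousLinearMap
  obtain ⟨C, hC⟩ := banach_steinhaus (g := fun d : D => T d) hbdd
  have hbounded : Bornology.IsBounded (Set.range fun d : D => T d) :=
    isBounded_iff_forall_norm_le.2 ⟨C, Set.forall_mem_range.2 hC⟩
  have hC0 : 0 ≤ C := (norm_nonneg _).trans (hC 1)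
  have hopen : IsOpen {A : M →L[ℝ] M | ∀ i, 0 < Δ.sumCoords (A (Δ i))} := by
    simp only [Set.ofPred_forall]
    refine isOpen_iInter_of_finite fun i => isOpen_lt continuous_const ?_
    exact Δ.sumCoords.continuous_of_finiteDimensional.comp (continuous_eval_const (Δ i))
  obtain ⟨r, hr, hball⟩ := Metric.isOpen_iff.1 hopen 1 (by simp)
  refine finite_of_totallyBounded_range (f := fun d : D => T d) (δ := r / (C + 1))
    (hbounded.isCompact_closure.totallyBounded.subset subset_closure) (by positivity) ?_
  intro d e hde
  have hnorm : ‖T (d * e⁻¹) - 1‖ < r :=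
    calc ‖T (d * e⁻¹) - 1‖ = ‖(T d - T e) * T (e⁻¹ : D)‖ := by
          congr 1
          ext v
          simp [T]
      _ ≤ ‖T d - T e‖ * ‖T (e⁻¹ : D)‖ := norm_mul_le _ _
      _ ≤ r / (C + 1) * C := by
          gcongr
          · exact (dist_eq_norm (T d) (T e) ▸ hde).le
          · exact hC e⁻¹
      _ < r := by
          rw [div_mul_eq_mul_div, div_lt_iff₀ (by positivity)]
          linarith
  have hone : (d * e⁻¹ : M ≃ₗ[ℝ] M) = 1 :=
    h.eq_one_of_forall_sumCoords_pos (hD (mul_mem d.2 (inv_mem e.2)))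
      (hball (mem_ball_iff_norm.2 hnorm))
  exact Subtype.ext (mul_inv_eq_one.1 hone)

theorem dihedralSubgroup_le_cox (h : IsCoxeterForm B Δ) {α ρ : M} (hα : α ∈ Phi B Δ)
    (hρ : ρ ∈ Phi B Δ) :
    dihedralSubgroup B (h.apply_self_of_mem_Phi hα) (h.apply_self_of_mem_Phi hρ) ≤ cox B Δ :=
  (Subgroup.closure_le _).2
    (Set.pair_subset (h.unitReflection_mem_cox hα) (h.unitReflection_mem_cox hρ))

theorem finite_dihedralSubgroup [Finite σ] (h : IsCoxeterForm B Δ) {α ρ : M}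
    (hα : α ∈ Phi B Δ) (hρ : ρ ∈ Phi B Δ) (hαρ : |B α ρ| < 1) :
    Finite (dihedralSubgroup B (h.apply_self_of_mem_Phi hα) (h.apply_self_of_mem_Phi hρ)) := by
  have hle := h.dihedralSubgroup_le_cox hα hρ
  refine h.finite_of_forall_norm_le hle fun v => ?_
  obtain ⟨C, hC⟩ := exists_norm_le_of_mem_span_pair h.symm (h.apply_self_of_mem_Phi hα)
    (h.apply_self_of_mem_Phi hρ) hαρ v
  refine ⟨‖v‖ + C, fun ⟨d, hd⟩ => ?_⟩
  have hdv : ‖d v - v‖ ≤ C := by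
    refine hC _ (sub_mem_span_pair_of_mem_dihedralSubgroup hd v) ?_
    rw [add_sub_cancel, h.apply_apply_of_mem_cox (hle hd)]
  calc ‖d v‖ = ‖v + (d v - v)‖ := by rw [add_sub_cancel]
    _ ≤ ‖v‖ + ‖d v - v‖ := norm_add_le _ _
    _ ≤ ‖v‖ + C := by gcongr

/-- Averaging over the finite reflection group of `α` and `ρ`. -/
theorem exists_mem_titsInterior_eq_zero [Finite σ] (h : IsCoxeterForm B Δ) {α ρ : M}
    (hα : α ∈ Phi B Δ) (hρ : ρ ∈ Phi B Δ) (hαρ : |B α ρ| < 1) :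
    ∃ y ∈ titsInterior B Δ, y α = 0 ∧ y ρ = 0 := by
  set D := dihedralSubgroup B (h.apply_self_of_mem_Phi hα) (h.apply_self_of_mem_Phi hρ)
  have : Finite D := h.finite_dihedralSubgroup hα hρ hαρ
  have : Fintype D := Fintype.ofFinite D
  set y : Module.Dual ℝ M := ∑ d : D, Δ.sumCoords ∘ₗ ((d : M ≃ₗ[ℝ] M) : M →ₗ[ℝ] M)
  have hy : y ∈ titsInterior B Δ := sum_mem_titsInterior Finset.univ_nonempty fun d _ =>
    h.comp_mem_titsInterior h.sumCoords_mem_titsInterior (h.dihedralSubgroup_le_cox hα hρ d.2)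
  have hinv (d : D) (v : M) : y ((d : M ≃ₗ[ℝ] M) v) = y v := by
    simp only [y, LinearMap.sum_apply]
    exact Fintype.sum_equiv (Equiv.mulRight d) _ _ fun _ => rfl
  have hzero {γ : M} (hγ : B γ γ = 1) (hmem : unitReflection B hγ ∈ D) : y γ = 0 := by
    have := hinv ⟨_, hmem⟩ γ
    rw [unitReflection_self, map_neg] at this
    linarith
  exact ⟨y, hy, hzero _ (unitReflection_left_mem_dihedralSubgroup _ _),
    hzero _ (unitReflection_right_mem_dihedralSubgroup _ _)⟩

theorem exists_mem_parabolicRoots [Finite σ] (h : IsCoxeterForm B Δ) {α ρ : M}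
    (hα : α ∈ Phi B Δ) (hρ : ρ ∈ Phi B Δ) (hαρ : |B α ρ| < 1) :
    ∃ I, (parabolicRoots B Δ I).Finite ∧ ∃ α' ∈ parabolicRoots B Δ I,
      ∃ ρ' ∈ parabolicRoots B Δ I, B α' ρ' = B α ρ := by
  obtain ⟨y, hy, hyα, hyρ⟩ := h.exists_mem_titsInterior_eq_zero hα hρ hαρ
  obtain ⟨w, hw, hwy⟩ := h.exists_mem_cox_forall_nonneg hy
  set z : Module.Dual ℝ M := y ∘ₗ ↑w
  have hzI := h.setOf_mem_Phi_eq_zero_eq_parabolicRoots (z := z) hwy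
  have hmem {γ : M} (hγ : γ ∈ Phi B Δ) (hyγ : y γ = 0) :
      w⁻¹ γ ∈ parabolicRoots B Δ {i | z (Δ i) = 0} := by
    have hwγ : z (w⁻¹ γ) = y γ := congrArg y (w.apply_symm_apply γ)
    exact hzI ▸ ⟨map_mem_Phi (inv_mem hw) hγ, hwγ.trans hyγ⟩
  exact ⟨_, hzI ▸ h.finite_setOf_mem_Phi_eq_zero (h.comp_mem_titsInterior hy hw),
    _, hmem hα hyα, _, hmem hρ hyρ, h.apply_apply_of_mem_cox (inv_mem hw) α ρ⟩

theorem finite_setOf_abs_apply_lt_one [Finite σ] (h : IsCoxeterForm B Δ) :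
    {b : ℝ | |b| < 1 ∧ ∃ α ∈ Phi B Δ, ∃ ρ ∈ Phi B Δ, B α ρ = b}.Finite := by
  refine (Set.toFinite {I | (parabolicRoots B Δ I).Finite}).biUnion
    (t := fun I => Set.image2 (fun α ρ => B α ρ) (parabolicRoots B Δ I) (parabolicRoots B Δ I))
    (fun I hI => hI.image2 _ hI) |>.subset ?_
  rintro _ ⟨hlt, α, hα, ρ, hρ, rfl⟩
  obtain ⟨I, hI, α', hα', ρ', hρ', heq⟩ := h.exists_mem_parabolicRoots hα hρ hlt
  exact Set.mem_biUnion hI ⟨α', hα', ρ', hρ', heq⟩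

theorem exists_pos_forall_le_apply [Finite σ] (h : IsCoxeterForm B Δ) :
    ∃ κ > 0, ∀ α ∈ Phi B Δ, ∀ ρ ∈ Phi B Δ, 0 < B α ρ → κ ≤ B α ρ := by
  set S := {b : ℝ | |b| < 1 ∧ ∃ α ∈ Phi B Δ, ∃ ρ ∈ Phi B Δ, B α ρ = b}
  obtain ⟨κ, hκ, hmin⟩ := Set.exists_min_image (insert 1 (S ∩ Set.Ioi 0)) id
    ((h.finite_setOf_abs_apply_lt_one.inter_of_left _).insert 1) (Set.insert_nonempty _ _)
  refine ⟨κ, ?_, fun α hα ρ hρ hpos => ?_⟩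
  · obtain rfl | hκ := hκ
    exacts [one_pos, hκ.2]
  · obtain hlt | hge := lt_or_ge (B α ρ) 1
    · exact hmin _ (Or.inr ⟨⟨abs_lt.2 ⟨by linarith, hlt⟩, α, hα, ρ, hρ, rfl⟩, hpos⟩)
    · exact (hmin 1 (Or.inl rfl)).trans hge

/-- The square of the Euclidean norm for which `Δ` is orthonormal. -/
def euclideanSq [Fintype σ] (Δ : Module.Basis σ ℝ M) (v : M) : ℝ :=
  ∑ i, Δ.repr v i ^ 2

theorem euclideanSq_basis [Fintype σ] (i : σ) : euclideanSq Δ (Δ i) = 1 := by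
  classical
  simp [euclideanSq, Finsupp.single_apply]

theorem exists_basis_apply_pos (h : IsCoxeterForm B Δ) {ρ : M} (hρ : ρ ∈ posPhi B Δ) :
    ∃ i, 0 < B (Δ i) ρ := by
  by_contra! hle
  have hρρ := h.apply_self_of_mem_Phi hρ.1
  rw [map_eq_sum_repr Δ (B ρ)] at hρρ
  have : ∑ i ∈ (Δ.repr ρ).support, Δ.repr ρ i * B ρ (Δ i) ≤ 0 :=
    Finset.sum_nonpos fun i _ => mul_nonpos_of_nonneg_of_nonpos (hρ.2 i) (h.symm ρ _ ▸ hle i)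
  linarith

theorem euclideanSq_simpleReflection_add_le [Fintype σ] (h : IsCoxeterForm B Δ) {ρ : M}
    (hρ : ρ ∈ posPhi B Δ) {i : σ} (hne : ρ ≠ Δ i) (hpos : 0 ≤ B (Δ i) ρ) :
    euclideanSq Δ (h.simpleReflection i ρ) + 4 * B (Δ i) ρ ^ 2 ≤ euclideanSq Δ ρ := by
  classical
  have hrepr (j : σ) : Δ.repr (h.simpleReflection i ρ) j =
      Δ.repr ρ j - 2 * B (Δ i) ρ * Finsupp.single i 1 j := by
    simp only [simpleReflection_apply, map_sub, map_smul, Module.Basis.repr_self,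
      Finsupp.sub_apply, Finsupp.smul_apply, smul_eq_mul]
  have hcoord : 0 ≤ Δ.repr ρ i - 2 * B (Δ i) ρ := by
    simpa [hrepr] using (h.simpleReflection_mem_posPhi hρ hne).2 i
  have hother : ∑ j ∈ Finset.univ.erase i, Δ.repr (h.simpleReflection i ρ) j ^ 2 =
      ∑ j ∈ Finset.univ.erase i, Δ.repr ρ j ^ 2 :=
    Finset.sum_congr rfl fun j hj => by simp [hrepr, (Finset.ne_of_mem_erase hj).symm]
  rw [euclideanSq, euclideanSq, ← Finset.add_sum_erase _ _ (Finset.mem_univ i),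
    ← Finset.add_sum_erase _ _ (Finset.mem_univ i), hother, hrepr, Finsupp.single_eq_same, mul_one]
  nlinarith [mul_nonneg hpos hcoord]

theorem hasExpr_basis (i : σ) : hasExpr B Δ (Δ i) 0 :=
  ⟨[], rfl, by simp, i, rfl⟩

theorem hasExpr_succ_of_simpleReflection (h : IsCoxeterForm B Δ) {ρ : M} {i : σ} {k : ℕ}
    (hk : hasExpr B Δ (h.simpleReflection i ρ) k) : hasExpr B Δ ρ (k + 1) := by
  obtain ⟨l, hl, hmem, j, hj⟩ := hk
  refine ⟨h.simpleReflection i :: l, by rw [List.length_cons, hl], ?_, j, ?_⟩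
  · exact List.forall_mem_cons.2 ⟨h.simpleReflections_eq_range ▸ Set.mem_range_self i, hmem⟩
  · rw [List.prod_cons, LinearEquiv.mul_apply, hj, simpleReflection_simpleReflection]

theorem exists_hasExpr_le_euclideanSq [Fintype σ] (h : IsCoxeterForm B Δ) {κ : ℝ} (hκ : 0 < κ)
    (hgap : ∀ α ∈ Phi B Δ, ∀ ρ ∈ Phi B Δ, 0 < B α ρ → κ ≤ B α ρ) {ρ : M}
    (hρ : ρ ∈ posPhi B Δ) :
    ∃ k : ℕ, hasExpr B Δ ρ k ∧ 1 + 4 * κ ^ 2 * k ≤ euclideanSq Δ ρ := by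
  obtain ⟨N, hN⟩ := exists_nat_gt (euclideanSq Δ ρ / (4 * κ ^ 2))
  rw [div_lt_iff₀ (by positivity)] at hN
  induction N generalizing ρ with
  | zero =>
    have hnonneg : 0 ≤ euclideanSq Δ ρ := Finset.sum_nonneg fun i _ => sq_nonneg _
    rw [Nat.cast_zero, zero_mul] at hN
    exact absurd hN hnonneg.not_gt
  | succ N ih =>
    obtain ⟨i, hi⟩ := h.exists_basis_apply_pos hρ
    rcases eq_or_ne ρ (Δ i) with rfl | hne
    · exact ⟨0, hasExpr_basis i, by simp [euclideanSq_basis]⟩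
    have hdrop : euclideanSq Δ (h.simpleReflection i ρ) + 4 * κ ^ 2 ≤ euclideanSq Δ ρ := by
      have hκi : κ ≤ B (Δ i) ρ := hgap _ (basis_mem_posPhi i).1 _ hρ.1 hi
      have hsq : κ ^ 2 ≤ B (Δ i) ρ ^ 2 := by gcongr
      linarith [h.euclideanSq_simpleReflection_add_le hρ hne hi.le]
    push_cast at hN
    obtain ⟨k, hk, hle⟩ := ih (h.simpleReflection_mem_posPhi hρ hne) (by linarith)
    refine ⟨k + 1, h.hasExpr_succ_of_simpleReflection hk, ?_⟩
    push_cast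
    linarith

end Roots

end IsCoxeterForm

/-- For the Euclidean norm making `Δ` orthonormal (so `‖ρ‖² = ∑ᵢ ρᵢ²` in `Δ`-coordinates),
there is `λ > 0` with `‖ρ‖² ≥ 1 + λ (dp(ρ) - 1)` for every positive root `ρ`. -/
theorem statement4 (B : LinearMap.BilinForm ℝ V) (Δ : Module.Basis ι ℝ V)
    (hsymm : ∀ u v : V, B u v = B v u)
    (hdiag : ∀ i : ι, B (Δ i) (Δ i) = 1)
    (hoff : ∀ i j : ι, i ≠ j → B (Δ i) (Δ j) ≤ -1 ∨
      ∃ k : ℕ, 2 ≤ k ∧ B (Δ i) (Δ j) = -Real.cos (Real.pi / (k : ℝ))) :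
    ∃ lam : ℝ, 0 < lam ∧ ∀ ρ ∈ posPhi B Δ,
      1 + lam * ((depth B Δ ρ : ℝ) - 1) ≤ ∑ i : ι, (Δ.repr ρ i) ^ 2 := by
  have h : IsCoxeterForm B Δ := ⟨hsymm, hdiag, hoff⟩
  obtain ⟨κ, hκ, hgap⟩ := h.exists_pos_forall_le_apply
  refine ⟨4 * κ ^ 2, by positivity, fun ρ hρ => ?_⟩
  obtain ⟨k, hk, hle⟩ := h.exists_hasExpr_le_euclideanSq hκ hgap hρ
  have hdepth : (depth B Δ ρ : ℝ) - 1 ≤ k := by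
    rw [depth, Nat.cast_add, Nat.cast_one, add_sub_cancel_left]
    exact_mod_cast Nat.sInf_le hk
  calc 1 + 4 * κ ^ 2 * ((depth B Δ ρ : ℝ) - 1) ≤ 1 + 4 * κ ^ 2 * k := by gcongr
    _ ≤ ∑ i, Δ.repr ρ i ^ 2 := hle
end
end

section
/- Suppose Δ is partitioned into two nonempty proper subsets Δ = Δ_I ⊔ Δ_J with B(α,β) = 0 for all α ∈ Δ_I and β ∈ Δ_J. Let W_I be the subgroup generated by {s_α : α∈Δ_I}, Φ_I = W_I·Δ_I, Φ_I⁺ = Φ_I ∩ cone(Δ_I), and E(Φ_I) the set of accumulation points of {ρ̂ : ρ ∈ Φ_I⁺}; define W_J, Φ_J, E(Φ_J) similarly. Then E(Φ) is the disjoint union of E(Φ_I) and E(Φ_J). -/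
open Filter Topology

noncomputable section

variable {ι V : Type*} [Fintype ι] [NormedAddCommGroup V] [NormedSpace ℝ V]

/-- The simple `B`-reflections associated to the simple roots `Δ i` with `i ∈ I`. -/
def simpleReflectionsOn (B : LinearMap.BilinForm ℝ V) (Δ : Module.Basis ι ℝ V) (I : Set ι) :
    Set (V ≃ₗ[ℝ] V) :=
  { e | ∃ i ∈ I, ∀ u : V, e u = u - (2 * B (Δ i) u / B (Δ i) (Δ i)) • Δ i }

/-- The subgroup `W_I` generated by the simple reflections indexed by `I`. -/
def coxOn (B : LinearMap.BilinForm ℝ V) (Δ : Module.Basis ι ℝ V) (I : Set ι) :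
    Subgroup (V ≃ₗ[ℝ] V) :=
  Subgroup.closure (simpleReflectionsOn B Δ I)

/-- The root system `Φ_I = W_I ⬝ Δ_I`. -/
def PhiOn (B : LinearMap.BilinForm ℝ V) (Δ : Module.Basis ι ℝ V) (I : Set ι) : Set V :=
  { ρ | ∃ w ∈ coxOn B Δ I, ∃ i ∈ I, w (Δ i) = ρ }

/-- The positive roots `Φ_I⁺ = Φ_I ∩ cone(Δ_I)`. -/
def posPhiOn (B : LinearMap.BilinForm ℝ V) (Δ : Module.Basis ι ℝ V) (I : Set ι) : Set V :=
  { ρ ∈ PhiOn B Δ I | (∀ i : ι, 0 ≤ Δ.repr ρ i) ∧ ∀ i ∉ I, Δ.repr ρ i = 0 }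

/-- The set `Φ̂_I` of normalized roots of `Φ_I`. -/
def nPhiOn (B : LinearMap.BilinForm ℝ V) (Δ : Module.Basis ι ℝ V) (I : Set ι) : Set V :=
  nrm Δ '' posPhiOn B Δ I

/-- `E(Φ_I)`: the set of accumulation points of the normalized roots of `Φ_I`. -/
def EsetOn (B : LinearMap.BilinForm ℝ V) (Δ : Module.Basis ι ℝ V) (I : Set ι) : Set V :=
  { x | AccPt x (𝓟 (nPhiOn B Δ I)) }

/-!
A reflection in a simple root outside `K` fixes `span Δ_K` pointwise as soon as that root is
orthogonal to `Δ_K`. Hence `W` acts on `span Δ_K` through `W_K`, and for a splitting of `Δ` into two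
orthogonal parts the `W`-orbit of a simple root is its orbit under the parabolic subgroup of its own
part: the roots, hence the normalized positive roots and their accumulation points, split
accordingly. The accumulation points of the two parts lie in complementary subspaces, whose only
common point `0` is not on the affine hyperplane `|v|₁ = 1`.
-/

section Roots

variable {κ : Type*} {B : LinearMap.BilinForm ℝ V} {Δ : Module.Basis κ ℝ V} {K L : Set κ}

theorem coxOn_mono (hKL : K ⊆ L) : coxOn B Δ K ≤ coxOn B Δ L :=
  Subgroup.closure_mono fun _ ⟨i, hi, he⟩ => ⟨i, hKL hi, he⟩

theorem phiOn_mono (hKL : K ⊆ L) : PhiOn B Δ K ⊆ PhiOn B Δ L :=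
  fun _ ⟨w, hw, i, hi, hρ⟩ => ⟨w, coxOn_mono hKL hw, i, hKL hi, hρ⟩

theorem apply_sub_self_mem_span_of_mem_coxOn {w : V ≃ₗ[ℝ] V} (hw : w ∈ coxOn B Δ K) (v : V) :
    w v - v ∈ Submodule.span ℝ (Δ '' K) := by
  induction hw using Subgroup.closure_induction generalizing v with
  | mem e he =>
    obtain ⟨i, hi, he⟩ := he
    rw [he v, sub_sub_cancel_left]
    exact neg_mem (Submodule.smul_mem _ _ (Submodule.subset_span ⟨i, hi, rfl⟩))
  | one => simp
  | mul x y _ _ hx hy => simpa using add_mem (hx (y v)) (hy v)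
  | inv x _ hx =>
    have hxv : x (x⁻¹ v) = v := x.apply_symm_apply v
    simpa [hxv] using neg_mem (hx (x⁻¹ v))

theorem apply_mem_span_of_mem_coxOn {w : V ≃ₗ[ℝ] V} (hw : w ∈ coxOn B Δ K) {v : V}
    (hv : v ∈ Submodule.span ℝ (Δ '' K)) : w v ∈ Submodule.span ℝ (Δ '' K) :=
  (Submodule.sub_mem_iff_left _ hv).1 (apply_sub_self_mem_span_of_mem_coxOn hw v)

theorem phiOn_subset_span : PhiOn B Δ K ⊆ Submodule.span ℝ (Δ '' K) := by
  rintro _ ⟨w, hw, i, hi, rfl⟩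
  exact apply_mem_span_of_mem_coxOn hw (Submodule.subset_span ⟨i, hi, rfl⟩)

theorem ne_zero_of_mem_phiOn {ρ : V} (hρ : ρ ∈ PhiOn B Δ K) : ρ ≠ 0 := by
  obtain ⟨w, -, i, -, rfl⟩ := hρ
  exact w.map_ne_zero_iff.2 (Δ.ne_zero i)

theorem exists_mem_coxOn_eqOn_span (horth : ∀ i ∉ K, ∀ j ∈ K, B (Δ i) (Δ j) = 0)
    {w : V ≃ₗ[ℝ] V} (hw : w ∈ coxOn B Δ L) :
    ∃ w' ∈ coxOn B Δ K, Set.EqOn w w' (Submodule.span ℝ (Δ '' K)) := by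
  induction hw using Subgroup.closure_induction with
  | mem e he =>
    obtain ⟨i, -, he⟩ := he
    by_cases hi : i ∈ K
    · exact ⟨e, Subgroup.subset_closure ⟨i, hi, he⟩, Set.eqOn_refl _ _⟩
    · refine ⟨1, one_mem _, fun v hv => ?_⟩
      have hBv : B (Δ i) v = 0 :=
        LinearMap.eqOn_span (g := 0) (Set.forall_mem_image.2 (horth i hi)) hv
      simp [he v, hBv]
  | one => exact ⟨1, one_mem _, Set.eqOn_refl _ _⟩
  | mul x y _ _ hx hy =>
    obtain ⟨x', hx', hxx'⟩ := hx
    obtain ⟨y', hy', hyy'⟩ := hy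
    refine ⟨x' * y', mul_mem hx' hy', fun v hv => ?_⟩
    calc x (y v) = x (y' v) := by rw [hyy' hv]
      _ = x' (y' v) := hxx' (apply_mem_span_of_mem_coxOn hy' hv)
  | inv x _ hx =>
    obtain ⟨x', hx', hxx'⟩ := hx
    refine ⟨x'⁻¹, inv_mem hx', fun v hv => (LinearEquiv.symm_apply_eq x).2 ?_⟩
    calc v = x' (x'⁻¹ v) := (x'.apply_symm_apply v).symm
      _ = x (x'⁻¹ v) := (hxx' (apply_mem_span_of_mem_coxOn (inv_mem hx') hv)).symm

theorem apply_basis_mem_phiOn (horth : ∀ i ∉ K, ∀ j ∈ K, B (Δ i) (Δ j) = 0) {w : V ≃ₗ[ℝ] V}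
    (hw : w ∈ coxOn B Δ L) {i : κ} (hi : i ∈ K) : w (Δ i) ∈ PhiOn B Δ K := by
  obtain ⟨w', hw', hww'⟩ := exists_mem_coxOn_eqOn_span horth hw
  exact ⟨w', hw', i, hi, (hww' (Submodule.subset_span ⟨i, hi, rfl⟩)).symm⟩

theorem phiOn_univ_eq_union (hK : ∀ i ∈ K, ∀ j ∉ K, B (Δ i) (Δ j) = 0)
    (hKc : ∀ i ∉ K, ∀ j ∈ K, B (Δ i) (Δ j) = 0) :
    PhiOn B Δ Set.univ = PhiOn B Δ K ∪ PhiOn B Δ Kᶜ := by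
  apply Set.Subset.antisymm
  · rintro _ ⟨w, hw, i, -, rfl⟩
    by_cases hi : i ∈ K
    · exact Or.inl (apply_basis_mem_phiOn hKc hw hi)
    · exact Or.inr (apply_basis_mem_phiOn (fun i hi => hK i (not_not.1 hi)) hw hi)
  · exact Set.union_subset (phiOn_mono (Set.subset_univ _)) (phiOn_mono (Set.subset_univ _))

theorem posPhiOn_eq_inter :
    posPhiOn B Δ K = PhiOn B Δ K ∩ {ρ | ∀ i, 0 ≤ Δ.repr ρ i} := by
  ext ρ
  refine ⟨fun ⟨hρ, hpos, _⟩ => ⟨hρ, hpos⟩, fun ⟨hρ, hpos⟩ => ⟨hρ, hpos, fun i hi => ?_⟩⟩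
  have hsupp : ↑(Δ.repr ρ).support ⊆ K := Δ.mem_span_image.1 (phiOn_subset_span hρ)
  exact Finsupp.notMem_support_iff.1 fun h => hi (hsupp h)

end Roots

section Normalization

variable {B : LinearMap.BilinForm ℝ V} {Δ : Module.Basis ι ℝ V} {K : Set ι}

theorem l1_eq_sumCoords : l1 Δ = Δ.sumCoords := by
  ext v
  simp [l1]

theorem l1_nrm {v : V} (hv : l1 Δ v ≠ 0) : l1 Δ (nrm Δ v) = 1 := by
  rw [l1_eq_sumCoords] at hv ⊢
  rw [nrm, l1_eq_sumCoords, map_smul, smul_eq_mul, inv_mul_cancel₀ hv]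

theorem l1_pos {v : V} (hnonneg : ∀ i, 0 ≤ Δ.repr v i) (hv : v ≠ 0) : 0 < l1 Δ v := by
  refine (Finset.sum_nonneg fun i _ => hnonneg i).lt_of_ne' fun hsum => hv (Δ.ext_elem fun i => ?_)
  have hi := (Finset.sum_eq_zero_iff_of_nonneg fun i _ => hnonneg i).1 hsum i (Finset.mem_univ i)
  simpa using hi

theorem l1_eq_one_of_mem_nPhiOn {x : V} (hx : x ∈ nPhiOn B Δ K) : l1 Δ x = 1 := by
  obtain ⟨ρ, ⟨hρ, hpos, -⟩, rfl⟩ := hx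
  exact l1_nrm (l1_pos hpos (ne_zero_of_mem_phiOn hρ)).ne'

theorem nPhiOn_subset_span : nPhiOn B Δ K ⊆ Submodule.span ℝ (Δ '' K) := by
  rintro _ ⟨ρ, ⟨hρ, -, -⟩, rfl⟩
  exact Submodule.smul_mem _ _ (phiOn_subset_span hρ)

theorem nPhiOn_univ_eq_union (hK : ∀ i ∈ K, ∀ j ∉ K, B (Δ i) (Δ j) = 0)
    (hKc : ∀ i ∉ K, ∀ j ∈ K, B (Δ i) (Δ j) = 0) :
    nPhiOn B Δ Set.univ = nPhiOn B Δ K ∪ nPhiOn B Δ Kᶜ := by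
  simp only [nPhiOn, posPhiOn_eq_inter, phiOn_univ_eq_union hK hKc, Set.union_inter_distrib_right,
    Set.image_union]

end Normalization

section AccumulationPoints

variable {B : LinearMap.BilinForm ℝ V} {Δ : Module.Basis ι ℝ V} {K L : Set ι}

theorem esetOn_eq_derivedSet : EsetOn B Δ K = derivedSet (nPhiOn B Δ K) := rfl

theorem esetOn_subset_of_isClosed {s : Set V} (hs : IsClosed s) (hsub : nPhiOn B Δ K ⊆ s) :
    EsetOn B Δ K ⊆ s :=
  (derivedSet_mono _ _ hsub).trans ((isClosed_iff_derivedSet_subset s).1 hs)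

theorem l1_eq_one_of_mem_esetOn {x : V} (hx : x ∈ EsetOn B Δ K) : l1 Δ x = 1 := by
  have : FiniteDimensional ℝ V := Module.Finite.of_basis Δ
  have hcont : Continuous (l1 Δ) := by
    rw [l1_eq_sumCoords]
    exact Δ.sumCoords.continuous_of_finiteDimensional
  exact esetOn_subset_of_isClosed (isClosed_eq hcont continuous_const)
    (fun _ => l1_eq_one_of_mem_nPhiOn) hx

theorem esetOn_subset_span : EsetOn B Δ K ⊆ Submodule.span ℝ (Δ '' K) :=
  have : FiniteDimensional ℝ V := Module.Finite.of_basis Δ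
  esetOn_subset_of_isClosed (Submodule.closed_of_finiteDimensional _) nPhiOn_subset_span

theorem disjoint_esetOn (hKL : Disjoint K L) : Disjoint (EsetOn B Δ K) (EsetOn B Δ L) := by
  refine Set.disjoint_left.2 fun x hxK hxL => ?_
  have hx : x = 0 := Submodule.disjoint_def.1 (Δ.linearIndependent.disjoint_span_image hKL) x
    (esetOn_subset_span hxK) (esetOn_subset_span hxL)
  have h_one : l1 Δ x = 1 := l1_eq_one_of_mem_esetOn hxK
  simp [hx, l1_eq_sumCoords] at h_one

end AccumulationPoints

theorem statement7_general (B : LinearMap.BilinForm ℝ V) (Δ : Module.Basis ι ℝ V) (I : Set ι)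
    (hI : ∀ i ∈ I, ∀ j ∉ I, B (Δ i) (Δ j) = 0) (hIc : ∀ i ∉ I, ∀ j ∈ I, B (Δ i) (Δ j) = 0) :
    EsetOn B Δ Set.univ = EsetOn B Δ I ∪ EsetOn B Δ Iᶜ ∧
    Disjoint (EsetOn B Δ I) (EsetOn B Δ Iᶜ) := by
  refine ⟨?_, disjoint_esetOn disjoint_compl_right⟩
  simp only [esetOn_eq_derivedSet, nPhiOn_univ_eq_union hI hIc, derivedSet_union]

/-- If `Δ = Δ_I ⊔ Δ_J` is a partition into two nonempty proper mutually `B`-orthogonal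
parts (here `J = Iᶜ`), then `E(Φ)` is the disjoint union of `E(Φ_I)` and `E(Φ_J)`. -/
theorem statement7 (B : LinearMap.BilinForm ℝ V) (Δ : Module.Basis ι ℝ V)
    (hsymm : ∀ u v : V, B u v = B v u)
    (hdiag : ∀ i : ι, B (Δ i) (Δ i) = 1)
    (hoff : ∀ i j : ι, i ≠ j → B (Δ i) (Δ j) ≤ -1 ∨
      ∃ k : ℕ, 2 ≤ k ∧ B (Δ i) (Δ j) = -Real.cos (Real.pi / (k : ℝ)))
    (I : Set ι) (hI : I.Nonempty) (hIc : Iᶜ.Nonempty)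
    (horth : ∀ i ∈ I, ∀ j ∈ Iᶜ, B (Δ i) (Δ j) = 0) :
    EsetOn B Δ Set.univ = EsetOn B Δ I ∪ EsetOn B Δ Iᶜ ∧
    Disjoint (EsetOn B Δ I) (EsetOn B Δ Iᶜ) :=
  statement7_general B Δ I horth fun i hi j hj => (hsymm _ _).trans (horth j hj i hi)
end
end
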